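/- Let n ≥ 1, let H be a Hilbert space, and let T = (T₁,…,Tₙ) be an n-tuple of bounded operators on H that is not nilpotent, i.e. ∑_{α∈𝔽ₙ⁺, |α|=k} T_α T_α^* ≠ 0 for every k ≥ 1. Then there exists a strictly positive weight sequence μ = {μ_β}_{|β|≥1} satisfying sup_{α∈𝔽ₙ⁺} μ_{g_iα} < ∞ for each i, with associated weighted left multi-shift W = (W₁,…,Wₙ) on F²(Hₙ), such that: (i) ‖∑_{|α|=k} W_α W_α^*‖^{1/2} ≤ (k+1)·‖∑_{|α|=k} T_α T_α^*‖^{1/2} for every k ≥ 1; (ii) r(W) = r(T); (iii) there exist a closed subspace M ⊆ ℓ²(𝔽ₙ⁺; H) invariant under each W_i^*⊗I_H and a bounded invertible operator X : H → M with ‖X‖·‖X⁻¹‖ ≤ π/√6 and T_i^* = X⁻¹((W_i^*⊗I_H)|_M)X for each i; (iv) ‖∑_α c_α T_α‖ ≤ (π/√6)·‖∑_α c_α W_α‖ for every finitely supported family (c_α)_{α∈𝔽ₙ⁺} of complex numbers, and the spectral radius of ∑_α c_α T_α is at most that of ∑_α c_α W_α. -/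

import Mathlib

open Filter ContinuousLinearMap
open scoped ComplexConjugate

noncomputable section

attribute [local instance] Classical.decEq

abbrev Word (n : ℕ) := FreeMonoid (Fin n)

abbrev Fock (n : ℕ) := lp (fun _ : Word n => ℂ) 2

def fockE {n : ℕ} (α : Word n) : Fock n := lp.single 2 α 1

def wordOp {n : ℕ} {H : Type*} [NormedAddCommGroup H] [InnerProductSpace ℂ H]
    (T : Fin n → H →L[ℂ] H) (α : Word n) : H →L[ℂ] H :=
  ((FreeMonoid.toList α).map T).prod

def wordOfFn {n k : ℕ} (f : Fin k → Fin n) : Word n := FreeMonoid.ofList (List.ofFn f)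

def rowSum {n : ℕ} {H : Type*} [NormedAddCommGroup H] [InnerProductSpace ℂ H]
    [CompleteSpace H] (T : Fin n → H →L[ℂ] H) (k : ℕ) : H →L[ℂ] H :=
  ∑ f : Fin k → Fin n, wordOp T (wordOfFn f) * adjoint (wordOp T (wordOfFn f))

def jsr {n : ℕ} {H : Type*} [NormedAddCommGroup H] [InnerProductSpace ℂ H]
    [CompleteSpace H] (T : Fin n → H →L[ℂ] H) : ℝ :=
  limUnder atTop fun k : ℕ => ‖rowSum T k‖ ^ ((1 : ℝ) / (2 * k))

def muProd {n : ℕ} (μ : Word n → ℝ) (β α : Word n) : ℝ :=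
  ((List.range (FreeMonoid.length β)).map
    fun j => μ (FreeMonoid.ofList ((FreeMonoid.toList β).drop j) * α)).prod

def IsWeightedShift {n : ℕ} (μ : Word n → ℝ) (W : Fin n → Fock n →L[ℂ] Fock n) : Prop :=
  ∀ (i : Fin n) (α : Word n),
    W i (fockE α) = (μ (FreeMonoid.of i * α) : ℂ) • fockE (FreeMonoid.of i * α)

def BddWeights {n : ℕ} (μ : Word n → ℝ) : Prop :=
  ∀ i : Fin n, BddAbove (Set.range fun α : Word n => μ (FreeMonoid.of i * α))

def IsWeightedShiftTensor {n : ℕ} {H : Type*} [NormedAddCommGroup H] [InnerProductSpace ℂ H]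
    (μ : Word n → ℝ)
    (Wt : Fin n → lp (fun _ : Word n => H) 2 →L[ℂ] lp (fun _ : Word n => H) 2) : Prop :=
  ∀ (i : Fin n) (α : Word n) (h : H),
    Wt i (lp.single 2 α h) = (μ (FreeMonoid.of i * α) : ℂ) • lp.single 2 (FreeMonoid.of i * α) h

def polyOp {n : ℕ} {H : Type*} [NormedAddCommGroup H] [InnerProductSpace ℂ H]
    (T : Fin n → H →L[ℂ] H) (c : Word n →₀ ℂ) : H →L[ℂ] H :=
  c.sum fun α z => z • wordOp T α

section WordOperators

variable {n : ℕ} {E : Type*} [NormedAddCommGroup E] [InnerProductSpace ℂ E]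
  {F : Type*} [NormedAddCommGroup F] [InnerProductSpace ℂ F]

@[simp]
theorem wordOp_one (T : Fin n → E →L[ℂ] E) : wordOp T 1 = 1 := rfl

theorem wordOp_mul (T : Fin n → E →L[ℂ] E) (α β : Word n) :
    wordOp T (α * β) = wordOp T α * wordOp T β := by
  simp [wordOp, FreeMonoid.toList_mul]

@[simp]
theorem wordOp_of (T : Fin n → E →L[ℂ] E) (i : Fin n) : wordOp T (FreeMonoid.of i) = T i := by
  simp [wordOp]

/-- The assignment of operators to words, as a monoid homomorphism. -/
def wordOpHom (T : Fin n → E →L[ℂ] E) : Word n →* (E →L[ℂ] E) where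
  toFun := wordOp T
  map_one' := wordOp_one T
  map_mul' := wordOp_mul T

theorem lift_wordOpHom (T : Fin n → E →L[ℂ] E) (x : MonoidAlgebra ℂ (Word n)) :
    MonoidAlgebra.lift ℂ (E →L[ℂ] E) (Word n) (wordOpHom T) x = polyOp T x.coeff := by
  rw [MonoidAlgebra.lift_apply]
  rfl

theorem polyOp_pow (T : Fin n → E →L[ℂ] E) (co : Word n →₀ ℂ) (m : ℕ) :
    polyOp T ((MonoidAlgebra.ofCoeff co ^ m).coeff) = polyOp T co ^ m := by
  rw [← lift_wordOpHom, map_pow, lift_wordOpHom]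

variable [CompleteSpace E] [CompleteSpace F]

theorem adjoint_polyOp (T : Fin n → E →L[ℂ] E) (co : Word n →₀ ℂ) :
    adjoint (polyOp T co) = co.sum fun α z => conj z • adjoint (wordOp T α) := by
  simp only [polyOp, Finsupp.sum, map_sum, map_smulₛₗ]

theorem comp_adjoint_wordOp {T : Fin n → E →L[ℂ] E} {R : Fin n → F →L[ℂ] F} {Y : E →L[ℂ] F}
    (hY : ∀ i, Y.comp (adjoint (T i)) = (adjoint (R i)).comp Y) (α : Word n) :
    Y.comp (adjoint (wordOp T α)) = (adjoint (wordOp R α)).comp Y := by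
  induction α using FreeMonoid.recOn with
  | one =>
    ext x
    simp [← star_eq_adjoint]
  | of_mul i α ih =>
    simp only [wordOp_mul, wordOp_of, ContinuousLinearMap.mul_def, adjoint_comp]
    rw [← comp_assoc, ih, comp_assoc, hY, comp_assoc]

theorem comp_adjoint_polyOp {T : Fin n → E →L[ℂ] E} {R : Fin n → F →L[ℂ] F} {Y : E →L[ℂ] F}
    (hY : ∀ i, Y.comp (adjoint (T i)) = (adjoint (R i)).comp Y) (co : Word n →₀ ℂ) :
    Y.comp (adjoint (polyOp T co)) = (adjoint (polyOp R co)).comp Y := by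
  ext x
  have h (α : Word n) : Y (adjoint (wordOp T α) x) = adjoint (wordOp R α) (Y x) :=
    DFunLike.congr_fun (comp_adjoint_wordOp hY α) x
  simp [adjoint_polyOp, Finsupp.sum, h]

/-- The polynomial calculus bound passes to spectral radii by Gelfand's formula. -/
theorem spectralRadius_polyOp_le {T : Fin n → E →L[ℂ] E} {R : Fin n → F →L[ℂ] F} {C : ℝ}
    (hC : 0 < C) (h : ∀ co, ‖polyOp T co‖ ≤ C * ‖polyOp R co‖) (co : Word n →₀ ℂ) :
    spectralRadius ℂ (polyOp T co) ≤ spectralRadius ℂ (polyOp R co) := by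
  have hT := spectrum.pow_norm_pow_one_div_tendsto_nhds_spectralRadius (polyOp T co)
  have hR := spectrum.pow_norm_pow_one_div_tendsto_nhds_spectralRadius (polyOp R co)
  have h1 : Tendsto (fun m : ℕ => ENNReal.ofReal (C ^ (1 / m : ℝ))) atTop (nhds 1) := by
    rw [← ENNReal.ofReal_one]
    refine ENNReal.tendsto_ofReal ?_
    have := (tendsto_const_nhds (x := C)).rpow tendsto_one_div_atTop_nhds_zero_nat
      (Or.inl hC.ne')
    simpa using this
  have hmul := ENNReal.Tendsto.mul h1 (Or.inl one_ne_zero) hR (Or.inr ENNReal.one_ne_top)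
  rw [one_mul] at hmul
  refine le_of_tendsto_of_tendsto' hT hmul fun m => ?_
  rw [← ENNReal.ofReal_mul (by positivity), ← Real.mul_rpow hC.le (norm_nonneg _)]
  refine ENNReal.ofReal_le_ofReal (Real.rpow_le_rpow (norm_nonneg _) ?_ (by positivity))
  simpa only [polyOp_pow] using h (MonoidAlgebra.ofCoeff co ^ m).coeff

end WordOperators

section RowSums

variable {n : ℕ} {E : Type*} [NormedAddCommGroup E] [InnerProductSpace ℂ E] [CompleteSpace E]

theorem inner_rowSum (T : Fin n → E →L[ℂ] E) (k : ℕ) (x y : E) :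
    inner ℂ (rowSum T k x) y = ∑ f : Fin k → Fin n,
      inner ℂ (adjoint (wordOp T (wordOfFn f)) x) (adjoint (wordOp T (wordOfFn f)) y) := by
  simp only [rowSum, sum_apply, sum_inner]
  refine Finset.sum_congr rfl fun f _ => ?_
  rw [adjoint_inner_right]
  rfl

theorem sum_norm_sq_adjoint_le (T : Fin n → E →L[ℂ] E) (k : ℕ) (x : E) :
    ∑ f : Fin k → Fin n, ‖adjoint (wordOp T (wordOfFn f)) x‖ ^ 2 ≤ ‖rowSum T k‖ * ‖x‖ ^ 2 := by
  have h : ∑ f : Fin k → Fin n, ‖adjoint (wordOp T (wordOfFn f)) x‖ ^ 2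
      = RCLike.re (inner ℂ (rowSum T k x) x) := by
    simp only [inner_rowSum, map_sum, inner_self_eq_norm_sq]
  rw [h]
  calc _ ≤ ‖rowSum T k x‖ * ‖x‖ := re_inner_le_norm _ _
    _ ≤ (‖rowSum T k‖ * ‖x‖) * ‖x‖ := by gcongr; exact le_opNorm _ _
    _ = _ := by ring

theorem norm_rowSum_le (T : Fin n → E →L[ℂ] E) (k : ℕ) {M : ℝ} (hM : 0 ≤ M)
    (h : ∀ x, ∑ f : Fin k → Fin n, ‖adjoint (wordOp T (wordOfFn f)) x‖ ^ 2 ≤ M * ‖x‖ ^ 2) :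
    ‖rowSum T k‖ ≤ M := by
  refine opNorm_le_of_re_inner_le hM fun x y hx hy => ?_
  have hx' := h x
  have hy' := h y
  rw [hx, one_pow, mul_one] at hx'
  rw [hy, one_pow, mul_one] at hy'
  rw [inner_rowSum, map_sum]
  calc _ ≤ ∑ f : Fin k → Fin n, (‖adjoint (wordOp T (wordOfFn f)) x‖ ^ 2
        + ‖adjoint (wordOp T (wordOfFn f)) y‖ ^ 2) / 2 := by
        refine Finset.sum_le_sum fun f _ => (re_inner_le_norm _ _).trans ?_
        nlinarith [sq_nonneg (‖adjoint (wordOp T (wordOfFn f)) x‖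
          - ‖adjoint (wordOp T (wordOfFn f)) y‖)]
    _ ≤ M := by
        rw [← Finset.sum_div, Finset.sum_add_distrib]
        linarith

theorem norm_rowSum_zero [Nontrivial E] (T : Fin n → E →L[ℂ] E) : ‖rowSum T 0‖ = 1 := by
  have : rowSum T 0 = 1 := by
    simp [rowSum, wordOfFn, wordOp, ← star_eq_adjoint]
  rw [this, norm_one]

theorem wordOfFn_append {m k : ℕ} (f : Fin m → Fin n) (g : Fin k → Fin n) :
    wordOfFn (Fin.append f g) = wordOfFn f * wordOfFn g := by
  simp [wordOfFn, List.ofFn_fin_append]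

theorem norm_rowSum_add_le (T : Fin n → E →L[ℂ] E) (m k : ℕ) :
    ‖rowSum T (m + k)‖ ≤ ‖rowSum T m‖ * ‖rowSum T k‖ := by
  refine norm_rowSum_le T _ (by positivity) fun x => ?_
  rw [← (Fin.appendEquiv m k).sum_comp, Fintype.sum_prod_type]
  calc _ = ∑ f : Fin m → Fin n, ∑ g : Fin k → Fin n,
        ‖adjoint (wordOp T (wordOfFn g)) (adjoint (wordOp T (wordOfFn f)) x)‖ ^ 2 := by
        refine Finset.sum_congr rfl fun f _ => Finset.sum_congr rfl fun g _ => ?_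
        change ‖adjoint (wordOp T (wordOfFn (Fin.append f g))) x‖ ^ 2 = _
        rw [wordOfFn_append, wordOp_mul, ContinuousLinearMap.mul_def, adjoint_comp]
        rfl
    _ ≤ ∑ f : Fin m → Fin n, ‖rowSum T k‖ * ‖adjoint (wordOp T (wordOfFn f)) x‖ ^ 2 :=
        Finset.sum_le_sum fun f _ => sum_norm_sq_adjoint_le T k _
    _ = ‖rowSum T k‖ * ∑ f : Fin m → Fin n, ‖adjoint (wordOp T (wordOfFn f)) x‖ ^ 2 := by
        rw [Finset.mul_sum]
    _ ≤ ‖rowSum T k‖ * (‖rowSum T m‖ * ‖x‖ ^ 2) := by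
        gcongr; exact sum_norm_sq_adjoint_le T m x
    _ = _ := by ring

end RowSums

/-- A positive submultiplicative sequence has a convergent root sequence. -/
theorem exists_tendsto_rpow_inv_of_submultiplicative {a : ℕ → ℝ} (ha : ∀ k, 0 < a k)
    (hmul : ∀ m k, a (m + k) ≤ a m * a k) :
    ∃ r, Tendsto (fun k : ℕ => a k ^ ((1 : ℝ) / (2 * k))) atTop (nhds r) := by
  have hs : Subadditive fun k => Real.log (a k) := fun m k => by
    rw [← Real.log_mul (ha m).ne' (ha k).ne']
    exact Real.log_le_log (ha _) (hmul m k)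
  have hexp : (fun k : ℕ => a k ^ ((1 : ℝ) / (2 * k)))
      = fun k : ℕ => Real.exp (Real.log (a k) / k * (1 / 2)) := by
    funext k
    rw [Real.rpow_def_of_pos (ha k)]
    congr 1
    ring
  rw [hexp]
  by_cases hb : BddBelow (Set.range fun k : ℕ => Real.log (a k) / k)
  · exact ⟨_, (Real.continuous_exp.tendsto _).comp ((hs.tendsto_lim hb).mul_const _)⟩
  · refine ⟨0, Real.tendsto_exp_atBot.comp (Tendsto.atBot_mul_const (by norm_num) ?_)⟩
    refine tendsto_atBot.2 fun L => ?_
    rw [not_bddBelow_iff] at hb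
    obtain ⟨_, ⟨k, rfl⟩, hk⟩ := hb (min L 0)
    have hk0 : k ≠ 0 := by
      rintro rfl
      simp at hk
    exact (hs.eventually_div_lt_of_div_lt hk0 (hk.trans_le (min_le_left _ _))).mono
      fun _ => le_of_lt

section WeightedShifts

theorem lp_hasSum_norm_sq {ι : Type*} {E : Type*} [NormedAddCommGroup E]
    (f : lp (fun _ : ι => E) 2) : HasSum (fun i => ‖f i‖ ^ 2) (‖f‖ ^ 2) := by
  simpa using lp.hasSum_norm (p := 2) (by norm_num) f

variable {n : ℕ} {E : Type*} [NormedAddCommGroup E] [InnerProductSpace ℂ E]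

/-- A square-summable family of linear maps, as a bounded operator into `ℓ²`. -/
def toLpCLM {ι V : Type*} [NormedAddCommGroup V] [NormedSpace ℂ V] (f : ι → V →ₗ[ℂ] E) {K : ℝ}
    (hK : 0 ≤ K) (hf : ∀ v (s : Finset ι), ∑ i ∈ s, ‖f i v‖ ^ 2 ≤ (K * ‖v‖) ^ 2) :
    V →L[ℂ] lp (fun _ : ι => E) 2 :=
  LinearMap.mkContinuous
    { toFun v := ⟨fun i => f i v, memℓp_gen' (C := (K * ‖v‖) ^ 2) (by simpa using hf v)⟩
      map_add' u v := by ext i; exact map_add (f i) u v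
      map_smul' c v := by ext i; exact map_smul (f i) c v }
    K fun v => lp.norm_le_of_forall_sum_le (by norm_num) (by positivity) (by simpa using hf v)

theorem norm_toLpCLM_le {ι V : Type*} [NormedAddCommGroup V] [NormedSpace ℂ V]
    (f : ι → V →ₗ[ℂ] E) {K : ℝ} (hK : 0 ≤ K)
    (hf : ∀ v (s : Finset ι), ∑ i ∈ s, ‖f i v‖ ^ 2 ≤ (K * ‖v‖) ^ 2) :
    ‖toLpCLM f hK hf‖ ≤ K :=
  LinearMap.mkContinuous_norm_le _ hK _

theorem sum_weighted_norm_sq_le {ι : Type*} {m : ι → ℝ} {φ : ι → ι}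
    (hφ : Function.Injective φ) {C : ℝ} (hm : ∀ i, |m i| ≤ C) (y : lp (fun _ : ι => E) 2)
    (s : Finset ι) : ∑ i ∈ s, ‖(m i : ℂ) • y (φ i)‖ ^ 2 ≤ (|C| * ‖y‖) ^ 2 := by
  have hsumm := (lp_hasSum_norm_sq y).summable
  calc ∑ i ∈ s, ‖(m i : ℂ) • y (φ i)‖ ^ 2
      ≤ ∑ i ∈ s, |C| ^ 2 * ‖y (φ i)‖ ^ 2 := by
        refine Finset.sum_le_sum fun i _ => ?_
        rw [norm_smul, Complex.norm_real, mul_pow, Real.norm_eq_abs]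
        exact mul_le_mul_of_nonneg_right (pow_le_pow_left₀ (abs_nonneg _)
          ((hm i).trans (le_abs_self C)) 2) (by positivity)
    _ = |C| ^ 2 * ∑ i ∈ s, ‖y (φ i)‖ ^ 2 := by rw [Finset.mul_sum]
    _ ≤ |C| ^ 2 * ∑' i, ‖y (φ i)‖ ^ 2 := by
        gcongr
        exact (hsumm.comp_injective hφ).sum_le_tsum _ fun _ _ => by positivity
    _ ≤ |C| ^ 2 * ∑' i, ‖y i‖ ^ 2 := by
        exact mul_le_mul_of_nonneg_left
          (tsum_comp_le_tsum_of_inj hsumm (fun _ => by positivity) hφ) (by positivity)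
    _ = _ := by rw [(lp_hasSum_norm_sq y).tsum_eq, mul_pow]

/-- The operator `y ↦ (γ ↦ m γ • y (φ γ))` on `ℓ²`, for bounded `m` and injective `φ`. -/
def weightedCompCLM {ι : Type*} (E : Type*) [NormedAddCommGroup E] [InnerProductSpace ℂ E]
    (m : ι → ℝ) {φ : ι → ι} (hφ : Function.Injective φ) {C : ℝ}
    (hm : ∀ i, |m i| ≤ C) : lp (fun _ : ι => E) 2 →L[ℂ] lp (fun _ : ι => E) 2 :=
  toLpCLM
    (fun i =>
      { toFun y := (m i : ℂ) • y (φ i)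
        map_add' _ _ := smul_add _ _ _
        map_smul' _ _ := smul_comm _ _ _ })
    (abs_nonneg C) (sum_weighted_norm_sq_le hφ hm)

@[simp]
theorem weightedCompCLM_apply {ι : Type*} (m : ι → ℝ) {φ : ι → ι} (hφ : Function.Injective φ)
    {C : ℝ} (hm : ∀ i, |m i| ≤ C) (y : lp (fun _ : ι => E) 2) (i : ι) :
    weightedCompCLM E m hφ hm y i = (m i : ℂ) • y (φ i) := rfl

variable [CompleteSpace E]

/-- The weighted left multi-shift on `ℓ²(Word n; E)` with bounded weights. -/
def weightedShift (E : Type*) [NormedAddCommGroup E] [InnerProductSpace ℂ E] [CompleteSpace E]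
    (μ : Word n → ℝ) {C : ℝ} (hμ : ∀ i γ, |μ (FreeMonoid.of i * γ)| ≤ C) (i : Fin n) :
    lp (fun _ : Word n => E) 2 →L[ℂ] lp (fun _ : Word n => E) 2 :=
  adjoint (weightedCompCLM E (fun γ => μ (FreeMonoid.of i * γ))
    (mul_right_injective (FreeMonoid.of i)) (hμ i))

variable {μ : Word n → ℝ} {C : ℝ} (hμ : ∀ i γ, |μ (FreeMonoid.of i * γ)| ≤ C)

@[simp]
theorem adjoint_weightedShift_apply (i : Fin n) (y : lp (fun _ : Word n => E) 2) (γ : Word n) :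
    adjoint (weightedShift E μ hμ i) y γ
      = (μ (FreeMonoid.of i * γ) : ℂ) • y (FreeMonoid.of i * γ) := by
  rw [weightedShift, adjoint_adjoint, weightedCompCLM_apply]

theorem isWeightedShiftTensor_weightedShift :
    IsWeightedShiftTensor μ (weightedShift E μ hμ) := by
  intro i α h
  refine ext_inner_right ℂ fun y => ?_
  rw [← adjoint_inner_right, lp.inner_single_left, adjoint_weightedShift_apply, inner_smul_left,
    lp.inner_single_left, inner_smul_right, Complex.conj_ofReal]

/-- The coordinatewise inner product with a vector. -/
def innerCLM (n : ℕ) (v : E) : lp (fun _ : Word n => E) 2 →L[ℂ] Fock n :=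
  lp.mapCLM 2 (fun _ => innerSL ℂ v) (norm_nonneg v) fun _ => (innerSL_apply_norm ℂ v).le

omit [CompleteSpace E] in
@[simp]
theorem innerCLM_apply (v : E) (y : lp (fun _ : Word n => E) 2) (γ : Word n) :
    innerCLM n v y γ = inner ℂ v (y γ) := rfl

theorem innerCLM_comp_adjoint_weightedShift (v : E) (i : Fin n) :
    (innerCLM n v).comp (adjoint (weightedShift E μ hμ i))
      = (adjoint (weightedShift ℂ μ hμ i)).comp (innerCLM n v) := by
  ext y γ
  simp

omit [CompleteSpace E] in
theorem hasSum_norm_innerCLM_sq {J : Type*} (b : HilbertBasis J ℂ E)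
    (y : lp (fun _ : Word n => E) 2) :
    HasSum (fun j => ‖innerCLM n (b j) y‖ ^ 2) (‖y‖ ^ 2) := by
  have hrow (γ : Word n) : HasSum (fun j => ‖(inner ℂ (b j) (y γ) : ℂ)‖ ^ 2) (‖y γ‖ ^ 2) := by
    simpa [b.repr_apply_apply] using lp_hasSum_norm_sq (b.repr (y γ))
  have hs : Summable fun p : Word n × J => ‖(inner ℂ (b p.2) (y p.1) : ℂ)‖ ^ 2 := by
    refine (summable_prod_of_nonneg fun _ => by positivity).2
      ⟨fun γ => (hrow γ).summable, ?_⟩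
    simpa only [(hrow _).tsum_eq] using (lp_hasSum_norm_sq y).summable
  have htot := hs.hasSum
  rw [(htot.prod_fiberwise hrow).unique (lp_hasSum_norm_sq y)] at htot
  exact ((Equiv.prodComm J (Word n)).hasSum_iff.2 htot).prod_fiberwise
    fun j => lp_hasSum_norm_sq (innerCLM n (b j) y)

/-- Amplification does not increase the norm of a polynomial in a weighted shift. -/
theorem norm_polyOp_weightedShift_le (co : Word n →₀ ℂ) :
    ‖polyOp (weightedShift E μ hμ) co‖ ≤ ‖polyOp (weightedShift ℂ μ hμ) co‖ := by
  rw [← (adjoint : _ ≃ₗᵢ⋆[ℂ] _).norm_map (polyOp (weightedShift E μ hμ) co),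
    ← (adjoint : _ ≃ₗᵢ⋆[ℂ] _).norm_map (polyOp (weightedShift ℂ μ hμ) co)]
  refine opNorm_le_bound _ (norm_nonneg _) fun y => ?_
  obtain ⟨_, b, -⟩ := exists_hilbertBasis ℂ E
  refine abs_le_of_sq_le_sq' (?_ : _ ≤ _ ^ 2) (by positivity) |>.2
  rw [mul_pow]
  refine hasSum_le (fun j => ?_) (hasSum_norm_innerCLM_sq b _)
    ((hasSum_norm_innerCLM_sq b y).mul_left _)
  rw [← mul_pow]
  gcongr
  have := DFunLike.congr_fun (comp_adjoint_polyOp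
    (innerCLM_comp_adjoint_weightedShift hμ (b j)) co) y
  rw [comp_apply, comp_apply] at this
  rw [this]
  exact le_opNorm _ _

end WeightedShifts

section RadialWeights

variable {n : ℕ} {E : Type*} [NormedAddCommGroup E] [InnerProductSpace ℂ E] [CompleteSpace E]

/-- The weights depending only on the length whose products along a word of length `k`
telescope to `b k / b 0`. -/
def radialWeight (n : ℕ) (b : ℕ → ℝ) (β : Word n) : ℝ :=
  b (FreeMonoid.length β) / b (FreeMonoid.length β - 1)

theorem radialWeight_of_mul (b : ℕ → ℝ) (i : Fin n) (γ : Word n) :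
    radialWeight n b (FreeMonoid.of i * γ)
      = b (FreeMonoid.length γ + 1) / b (FreeMonoid.length γ) := by
  simp [radialWeight, FreeMonoid.length_mul, add_comm]

theorem length_wordOfFn {k : ℕ} (f : Fin k → Fin n) : FreeMonoid.length (wordOfFn f) = k :=
  List.length_ofFn

theorem wordOfFn_mul_injective (k : ℕ) :
    Function.Injective fun p : (Fin k → Fin n) × Word n => wordOfFn p.1 * p.2 := by
  rintro ⟨f, γ⟩ ⟨g, δ⟩ h
  have h' : List.ofFn f ++ FreeMonoid.toList γ = List.ofFn g ++ FreeMonoid.toList δ := h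
  obtain ⟨h1, h2⟩ := List.append_inj h' (by simp)
  exact Prod.ext (List.ofFn_injective h1) h2

omit [InnerProductSpace ℂ E] [CompleteSpace E] in
theorem summable_norm_sq_wordOfFn_mul (y : lp (fun _ : Word n => E) 2) {k : ℕ}
    (f : Fin k → Fin n) : Summable fun γ => ‖y (wordOfFn f * γ)‖ ^ 2 :=
  (lp_hasSum_norm_sq y).summable.comp_injective (mul_right_injective (wordOfFn f))

omit [InnerProductSpace ℂ E] [CompleteSpace E] in
theorem sum_tsum_norm_sq_wordOfFn_mul_le (y : lp (fun _ : Word n => E) 2) (k : ℕ) :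
    ∑ f : Fin k → Fin n, ∑' γ, ‖y (wordOfFn f * γ)‖ ^ 2 ≤ ‖y‖ ^ 2 := by
  have hinj := wordOfFn_mul_injective (n := n) k
  have hy := lp_hasSum_norm_sq y
  have hs : Summable fun p : (Fin k → Fin n) × Word n => ‖y (wordOfFn p.1 * p.2)‖ ^ 2 :=
    hy.summable.comp_injective hinj
  calc ∑ f : Fin k → Fin n, ∑' γ, ‖y (wordOfFn f * γ)‖ ^ 2
      = ∑' f : Fin k → Fin n, ∑' γ, ‖y (wordOfFn f * γ)‖ ^ 2 := (tsum_fintype _).symm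
    _ = ∑' p : (Fin k → Fin n) × Word n, ‖y (wordOfFn p.1 * p.2)‖ ^ 2 := hs.tsum_prod.symm
    _ ≤ ∑' γ, ‖y γ‖ ^ 2 :=
        tsum_comp_le_tsum_of_inj hy.summable (fun _ => by positivity) hinj
    _ = ‖y‖ ^ 2 := hy.tsum_eq

theorem fockE_apply_self (α : Word n) : fockE α α = 1 :=
  lp.single_apply_self 2 α 1

theorem norm_fockE (α : Word n) : ‖fockE α‖ = 1 := by
  rw [fockE, lp.norm_single (by norm_num), norm_one]

variable {b : ℕ → ℝ} (hb : ∀ k, 0 < b k) {C : ℝ}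
  (hμ : ∀ i γ, |radialWeight n b (FreeMonoid.of i * γ)| ≤ C)

include hb

theorem adjoint_wordOp_weightedShift_apply (α : Word n) (y : lp (fun _ : Word n => E) 2)
    (γ : Word n) :
    adjoint (wordOp (weightedShift E (radialWeight n b) hμ) α) y γ
      = ((b (FreeMonoid.length α + FreeMonoid.length γ) / b (FreeMonoid.length γ) : ℝ) : ℂ)
        • y (α * γ) := by
  induction α using FreeMonoid.recOn generalizing y with
  | one => simp [← star_eq_adjoint, div_self (hb _).ne']
  | of_mul i α ih =>
    rw [wordOp_mul, wordOp_of, ContinuousLinearMap.mul_def, adjoint_comp, comp_apply, ih,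
      adjoint_weightedShift_apply, radialWeight_of_mul, smul_smul, mul_assoc, ← Complex.ofReal_mul,
      FreeMonoid.length_mul, FreeMonoid.length_mul, FreeMonoid.length_of]
    congr 2
    have h1 := (hb (FreeMonoid.length α + FreeMonoid.length γ)).ne'
    rw [div_mul_div_comm, mul_comm, mul_div_mul_right _ _ h1]
    congr 2
    ring

theorem norm_sq_adjoint_wordOp_weightedShift_le {k : ℕ} {M : ℝ}
    (hM : ∀ m, (b (k + m) / b m) ^ 2 ≤ M) (y : lp (fun _ : Word n => E) 2) (f : Fin k → Fin n) :
    ‖adjoint (wordOp (weightedShift E (radialWeight n b) hμ) (wordOfFn f)) y‖ ^ 2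
      ≤ M * ∑' γ, ‖y (wordOfFn f * γ)‖ ^ 2 := by
  refine hasSum_le (fun γ => ?_) (lp_hasSum_norm_sq _)
    ((summable_norm_sq_wordOfFn_mul y f).hasSum.mul_left M)
  rw [adjoint_wordOp_weightedShift_apply hb, length_wordOfFn, norm_smul, Complex.norm_real,
    mul_pow, Real.norm_eq_abs, sq_abs]
  exact mul_le_mul_of_nonneg_right (hM _) (by positivity)

theorem norm_rowSum_weightedShift_le (k : ℕ) {M : ℝ}
    (hM : ∀ m, (b (k + m) / b m) ^ 2 ≤ M) :
    ‖rowSum (weightedShift E (radialWeight n b) hμ) k‖ ≤ M := by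
  have hM0 : 0 ≤ M := (sq_nonneg _).trans (hM 0)
  refine norm_rowSum_le _ k hM0 fun y => ?_
  refine (Finset.sum_le_sum fun f _ =>
    norm_sq_adjoint_wordOp_weightedShift_le hb hμ hM y f).trans ?_
  rw [← Finset.mul_sum]
  exact mul_le_mul_of_nonneg_left (sum_tsum_norm_sq_wordOfFn_mul_le y k) hM0

theorem le_norm_rowSum_weightedShift (hn : 1 ≤ n) (k : ℕ) :
    (b k / b 0) ^ 2 ≤ ‖rowSum (weightedShift ℂ (radialWeight n b) hμ) k‖ := by
  let f : Fin k → Fin n := fun _ => ⟨0, hn⟩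
  have h := sum_norm_sq_adjoint_le (weightedShift ℂ (radialWeight n b) hμ) k
    (fockE (wordOfFn f))
  rw [norm_fockE, one_pow, mul_one] at h
  have hval : adjoint (wordOp (weightedShift ℂ (radialWeight n b) hμ) (wordOfFn f))
      (fockE (wordOfFn f)) 1 = ((b k / b 0 : ℝ) : ℂ) := by
    rw [adjoint_wordOp_weightedShift_apply hb, length_wordOfFn, mul_one, fockE_apply_self]
    simp
  have h2 := lp.norm_apply_le_norm (p := 2) (by norm_num)
    (adjoint (wordOp (weightedShift ℂ (radialWeight n b) hμ) (wordOfFn f))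
      (fockE (wordOfFn f))) 1
  rw [hval, Complex.norm_real, Real.norm_eq_abs] at h2
  calc (b k / b 0) ^ 2 = |b k / b 0| ^ 2 := (sq_abs _).symm
    _ ≤ ‖adjoint (wordOp (weightedShift ℂ (radialWeight n b) hμ) (wordOfFn f))
          (fockE (wordOfFn f))‖ ^ 2 := pow_le_pow_left₀ (abs_nonneg _) h2 2
    _ ≤ _ := Finset.single_le_sum
        (f := fun g : Fin k → Fin n =>
          ‖adjoint (wordOp (weightedShift ℂ (radialWeight n b) hμ) (wordOfFn g))
            (fockE (wordOfFn f))‖ ^ 2)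
        (fun _ _ => by positivity) (Finset.mem_univ f)
    _ ≤ _ := h

end RadialWeights

section Embedding

variable {n : ℕ} {E : Type*} [NormedAddCommGroup E] [InnerProductSpace ℂ E] [CompleteSpace E]

theorem sum_weighted_adjoint_wordOp_le (T : Fin n → E →L[ℂ] E) {b : ℕ → ℝ} {S : ℝ}
    (hS : HasSum (fun k => ‖rowSum T k‖ / b k ^ 2) S) (x : E) (s : Finset (Word n)) :
    ∑ α ∈ s, ‖(((b (FreeMonoid.length α))⁻¹ : ℝ) : ℂ) • adjoint (wordOp T α) x‖ ^ 2
      ≤ (√S * ‖x‖) ^ 2 := by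
  set F : Word n → ℝ :=
    fun α => ‖(((b (FreeMonoid.length α))⁻¹ : ℝ) : ℂ) • adjoint (wordOp T α) x‖ ^ 2
  let e : Word n ≃ Σ k, Fin k → Fin n := FreeMonoid.toList.trans List.equivSigmaTuple
  have hF0 (α) : 0 ≤ F α := by positivity
  have hlevel (k : ℕ) : ∑ f : Fin k → Fin n, F (e.symm ⟨k, f⟩)
      ≤ ‖rowSum T k‖ / b k ^ 2 * ‖x‖ ^ 2 := by
    calc _ = (b k ^ 2)⁻¹ * ∑ f : Fin k → Fin n, ‖adjoint (wordOp T (wordOfFn f)) x‖ ^ 2 := by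
          rw [Finset.mul_sum]
          refine Finset.sum_congr rfl fun f _ => ?_
          change ‖(((b (FreeMonoid.length (wordOfFn f)))⁻¹ : ℝ) : ℂ)
            • adjoint (wordOp T (wordOfFn f)) x‖ ^ 2 = _
          rw [length_wordOfFn, norm_smul, Complex.norm_real, mul_pow, Real.norm_eq_abs, sq_abs,
            inv_pow]
      _ ≤ (b k ^ 2)⁻¹ * (‖rowSum T k‖ * ‖x‖ ^ 2) := by
          gcongr
          exact sum_norm_sq_adjoint_le T k x
      _ = _ := by ring
  have hS' := hS.mul_right (‖x‖ ^ 2)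
  have hsum : Summable fun p : Σ k, Fin k → Fin n => F (e.symm p) := by
    refine (summable_sigma_of_nonneg fun _ => hF0 _).2 ⟨fun k => .of_finite, ?_⟩
    refine .of_nonneg_of_le (fun k => tsum_nonneg fun _ => hF0 _) (fun k => ?_) hS'.summable
    rw [tsum_fintype]
    exact hlevel k
  have hsumF : Summable F := e.symm.summable_iff.1 hsum
  have hS0 : 0 ≤ S := hS.nonneg fun k => by positivity
  calc ∑ α ∈ s, F α ≤ ∑' α, F α := hsumF.sum_le_tsum _ fun α _ => hF0 α
    _ = ∑' p : Σ k, Fin k → Fin n, F (e.symm p) := (e.symm.tsum_eq F).symm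
    _ ≤ S * ‖x‖ ^ 2 := by
        rw [hsum.tsum_sigma]
        refine hasSum_le (fun k => ?_) hsum.sigma.hasSum hS'
        rw [tsum_fintype]
        exact hlevel k
    _ = _ := by rw [mul_pow, Real.sq_sqrt hS0]

/-- The map `x ↦ (α ↦ (b |α|)⁻¹ • T_α^* x)` into `ℓ²(Word n; E)`. -/
def embedCLM (T : Fin n → E →L[ℂ] E) {b : ℕ → ℝ} {S : ℝ}
    (hS : HasSum (fun k => ‖rowSum T k‖ / b k ^ 2) S) : E →L[ℂ] lp (fun _ : Word n => E) 2 :=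
  toLpCLM
    (fun α => ((((b (FreeMonoid.length α))⁻¹ : ℝ) : ℂ) • adjoint (wordOp T α) : E →L[ℂ] E))
    (Real.sqrt_nonneg S) (sum_weighted_adjoint_wordOp_le T hS)

theorem embedCLM_apply (T : Fin n → E →L[ℂ] E) {b : ℕ → ℝ} {S : ℝ}
    (hS : HasSum (fun k => ‖rowSum T k‖ / b k ^ 2) S) (x : E) (α : Word n) :
    embedCLM T hS x α = (((b (FreeMonoid.length α))⁻¹ : ℝ) : ℂ) • adjoint (wordOp T α) x := rfl

theorem norm_embedCLM_le (T : Fin n → E →L[ℂ] E) {b : ℕ → ℝ} {S : ℝ}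
    (hS : HasSum (fun k => ‖rowSum T k‖ / b k ^ 2) S) : ‖embedCLM T hS‖ ≤ √S :=
  norm_toLpCLM_le _ _ _

theorem norm_le_norm_embedCLM (T : Fin n → E →L[ℂ] E) {b : ℕ → ℝ} {S : ℝ}
    (hS : HasSum (fun k => ‖rowSum T k‖ / b k ^ 2) S) (hb0 : b 0 = 1) (x : E) :
    ‖x‖ ≤ ‖embedCLM T hS x‖ := by
  have h := lp.norm_apply_le_norm (p := 2) (by norm_num) (embedCLM T hS x) 1
  rw [embedCLM_apply] at h
  simpa [hb0, ← star_eq_adjoint] using h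

theorem embedCLM_comp_adjoint (T : Fin n → E →L[ℂ] E) {b : ℕ → ℝ} (hb : ∀ k, 0 < b k) {S : ℝ}
    (hS : HasSum (fun k => ‖rowSum T k‖ / b k ^ 2) S) {C : ℝ}
    (hμ : ∀ i γ, |radialWeight n b (FreeMonoid.of i * γ)| ≤ C) (i : Fin n) :
    (embedCLM T hS).comp (adjoint (T i))
      = (adjoint (weightedShift E (radialWeight n b) hμ i)).comp (embedCLM T hS) := by
  ext x γ
  rw [comp_apply, comp_apply, embedCLM_apply, adjoint_weightedShift_apply, embedCLM_apply,
    radialWeight_of_mul, smul_smul, ← Complex.ofReal_mul, wordOp_mul, wordOp_of,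
    ContinuousLinearMap.mul_def, adjoint_comp, comp_apply, FreeMonoid.length_mul,
    FreeMonoid.length_of, add_comm 1]
  congr 2
  rw [div_mul_comm, div_eq_mul_inv, mul_right_comm, inv_mul_cancel₀ (hb _).ne', one_mul]

end Embedding

section ModelWeights

variable {n : ℕ} {E : Type*} [NormedAddCommGroup E] [InnerProductSpace ℂ E] [CompleteSpace E]

/-- The weight products of the model multi-shift of `T`. -/
def modelProd (T : Fin n → E →L[ℂ] E) (k : ℕ) : ℝ := ((k : ℝ) + 1) * √‖rowSum T k‖

theorem modelProd_sq (T : Fin n → E →L[ℂ] E) (k : ℕ) :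
    modelProd T k ^ 2 = ((k : ℝ) + 1) ^ 2 * ‖rowSum T k‖ := by
  rw [modelProd, mul_pow, Real.sq_sqrt (norm_nonneg _)]

theorem modelProd_zero [Nontrivial E] (T : Fin n → E →L[ℂ] E) : modelProd T 0 = 1 := by
  simp [modelProd, norm_rowSum_zero]

theorem modelProd_add_div_le {T : Fin n → E →L[ℂ] E} (hT : ∀ k, 0 < modelProd T k) (k m : ℕ) :
    modelProd T (k + m) / modelProd T m ≤ modelProd T k := by
  rw [div_le_iff₀ (hT m)]
  have h : √‖rowSum T (k + m)‖ ≤ √‖rowSum T k‖ * √‖rowSum T m‖ := by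
    rw [← Real.sqrt_mul (norm_nonneg _)]
    exact Real.sqrt_le_sqrt (norm_rowSum_add_le T k m)
  have hkm : ((k + m : ℕ) : ℝ) + 1 ≤ ((k : ℝ) + 1) * ((m : ℝ) + 1) := by
    push_cast
    nlinarith [mul_nonneg (Nat.cast_nonneg (α := ℝ) k) (Nat.cast_nonneg (α := ℝ) m)]
  calc modelProd T (k + m)
      ≤ (((k : ℝ) + 1) * ((m : ℝ) + 1)) * (√‖rowSum T k‖ * √‖rowSum T m‖) := by
        unfold modelProd
        gcongr
    _ = modelProd T k * modelProd T m := by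
        unfold modelProd
        ring

theorem hasSum_norm_rowSum_div_modelProd_sq {T : Fin n → E →L[ℂ] E}
    (hT : ∀ k, 0 < ‖rowSum T k‖) :
    HasSum (fun k => ‖rowSum T k‖ / modelProd T k ^ 2) (Real.pi ^ 2 / 6) := by
  have h := (hasSum_nat_add_iff' (f := fun k : ℕ => (1 : ℝ) / (k : ℝ) ^ 2) 1).2 hasSum_zeta_two
  simp only [Finset.range_one, Finset.sum_singleton, Nat.cast_zero, ne_eq, OfNat.ofNat_ne_zero,
    not_false_eq_true, zero_pow, div_zero, sub_zero, Nat.cast_add, Nat.cast_one] at h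
  refine h.congr_fun ?_
  intro k
  rw [modelProd_sq, div_mul_cancel_right₀ (hT k).ne', one_div]

theorem norm_rowSum_pos [Nontrivial E] {T : Fin n → E →L[ℂ] E}
    (hT : ∀ k : ℕ, 1 ≤ k → rowSum T k ≠ 0) (k : ℕ) : 0 < ‖rowSum T k‖ := by
  rcases Nat.eq_zero_or_pos k with rfl | hk
  · rw [norm_rowSum_zero]
    exact one_pos
  · exact norm_pos_iff.2 (hT k hk)

theorem jsr_eq_of_norm_rowSum_eq {F : Type*} [NormedAddCommGroup F] [InnerProductSpace ℂ F]
    [CompleteSpace F] {T : Fin n → E →L[ℂ] E} (hT : ∀ k, 0 < ‖rowSum T k‖)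
    {R : Fin n → F →L[ℂ] F} (h : ∀ k, ‖rowSum R k‖ = ((k : ℝ) + 1) ^ 2 * ‖rowSum T k‖) :
    jsr R = jsr T := by
  obtain ⟨r, hr⟩ := exists_tendsto_rpow_inv_of_submultiplicative hT (norm_rowSum_add_le T)
  have h1 : Tendsto (fun k : ℕ => (((k : ℝ) + 1) ^ 2) ^ ((1 : ℝ) / (2 * k))) atTop (nhds 1) := by
    have := (tendsto_rpow_div_mul_add 1 1 (-1) zero_ne_one).comp
      (tendsto_atTop_add_const_right atTop (1 : ℝ) tendsto_natCast_atTop_atTop)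
    refine this.congr fun k => ?_
    rw [Function.comp_apply, ← Real.rpow_natCast, ← Real.rpow_mul (by positivity)]
    congr 1
    push_cast
    ring
  have hR : Tendsto (fun k : ℕ => ‖rowSum R k‖ ^ ((1 : ℝ) / (2 * k))) atTop (nhds r) := by
    have := h1.mul hr
    rw [one_mul] at this
    refine this.congr fun k => ?_
    rw [h, Real.mul_rpow (by positivity) (norm_nonneg _)]
  exact hR.limUnder_eq.trans hr.limUnder_eq.symm

end ModelWeights

theorem stmt_13 (n : ℕ) (hn : 1 ≤ n)
    {H : Type*} [NormedAddCommGroup H] [InnerProductSpace ℂ H] [CompleteSpace H]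
    (T : Fin n → H →L[ℂ] H)
    (hT : ∀ k : ℕ, 1 ≤ k → rowSum T k ≠ 0) :
    ∃ μ : Word n → ℝ,
      (∀ β : Word n, 1 ≤ FreeMonoid.length β → 0 < μ β) ∧ BddWeights μ ∧
      ∃ W : Fin n → Fock n →L[ℂ] Fock n, IsWeightedShift μ W ∧
        (∀ k : ℕ, 1 ≤ k →
          Real.sqrt ‖rowSum W k‖ ≤ ((k : ℝ) + 1) * Real.sqrt ‖rowSum T k‖) ∧
        jsr W = jsr T ∧
        (∃ Wt : Fin n → lp (fun _ : Word n => H) 2 →L[ℂ] lp (fun _ : Word n => H) 2,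
          IsWeightedShiftTensor μ Wt ∧
          ∃ (X : H →L[ℂ] lp (fun _ : Word n => H) 2) (c : ℝ), 0 < c ∧
            (∀ h : H, c * ‖h‖ ≤ ‖X h‖) ∧
            (∀ i : Fin n, ∀ y ∈ Set.range X, adjoint (Wt i) y ∈ Set.range X) ∧
            (∀ i : Fin n, X.comp (adjoint (T i)) = (adjoint (Wt i)).comp X) ∧
            ‖X‖ * c⁻¹ ≤ Real.pi / Real.sqrt 6) ∧
        ∀ co : Word n →₀ ℂ,
          ‖polyOp T co‖ ≤ (Real.pi / Real.sqrt 6) * ‖polyOp W co‖ ∧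
          spectralRadius ℂ (polyOp T co) ≤ spectralRadius ℂ (polyOp W co) := by
  have hnt : Nontrivial H := by
    by_contra hH
    rw [not_nontrivial_iff_subsingleton] at hH
    exact hT 1 le_rfl (Subsingleton.elim _ _)
  have hpos := norm_rowSum_pos hT
  have hb (k : ℕ) : 0 < modelProd T k := mul_pos (by positivity) (Real.sqrt_pos.2 (hpos k))
  have hquot (i : Fin n) (γ : Word n) :
      0 < radialWeight n (modelProd T) (FreeMonoid.of i * γ) := by
    rw [radialWeight_of_mul]
    exact div_pos (hb _) (hb _)
  have hμ (i : Fin n) (γ : Word n) :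
      |radialWeight n (modelProd T) (FreeMonoid.of i * γ)| ≤ modelProd T 1 := by
    rw [abs_of_pos (hquot i γ), radialWeight_of_mul, add_comm]
    exact modelProd_add_div_le hb 1 _
  set W := weightedShift ℂ (radialWeight n (modelProd T)) hμ
  have hrow (k : ℕ) : ‖rowSum W k‖ = ((k : ℝ) + 1) ^ 2 * ‖rowSum T k‖ := by
    rw [← modelProd_sq]
    refine le_antisymm (norm_rowSum_weightedShift_le hb hμ k fun m => ?_) ?_
    · exact pow_le_pow_left₀ (div_pos (hb _) (hb _)).le (modelProd_add_div_le hb k m) 2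
    · simpa [modelProd_zero] using le_norm_rowSum_weightedShift hb hμ hn k
  have hS := hasSum_norm_rowSum_div_modelProd_sq hpos
  have hsqrt : √(Real.pi ^ 2 / 6) = Real.pi / √6 := by
    rw [Real.sqrt_div (sq_nonneg _), Real.sqrt_sq Real.pi_pos.le]
  have hXnorm : ‖embedCLM T hS‖ ≤ Real.pi / √6 := hsqrt ▸ norm_embedCLM_le T hS
  have hXle := norm_le_norm_embedCLM T hS (modelProd_zero T)
  have hXcomp := embedCLM_comp_adjoint T hb hS hμ
  have hpoly (co : Word n →₀ ℂ) :
      ‖polyOp T co‖ ≤ (Real.pi / √6) * ‖polyOp W co‖ := by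
    rw [← (adjoint : _ ≃ₗᵢ⋆[ℂ] _).norm_map (polyOp T co)]
    refine opNorm_le_bound _ (by positivity) fun x => ?_
    have hx := DFunLike.congr_fun (comp_adjoint_polyOp hXcomp co) x
    rw [comp_apply, comp_apply] at hx
    have hnorm := (adjoint : _ ≃ₗᵢ⋆[ℂ] _).norm_map
      (polyOp (weightedShift H (radialWeight n (modelProd T)) hμ) co)
    calc ‖adjoint (polyOp T co) x‖ ≤ ‖embedCLM T hS (adjoint (polyOp T co) x)‖ := hXle _
      _ ≤ ‖polyOp W co‖ * ‖embedCLM T hS x‖ := by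
        rw [hx]
        exact le_of_opNorm_le _ (hnorm.trans_le (norm_polyOp_weightedShift_le hμ co)) _
      _ ≤ ‖polyOp W co‖ * (Real.pi / √6 * ‖x‖) := by
        gcongr
        exact le_of_opNorm_le _ hXnorm x
      _ = _ := by ring
  refine ⟨radialWeight n (modelProd T), fun β _ => div_pos (hb _) (hb _), fun i =>
    ⟨modelProd T 1, ?_⟩, W, fun i α => ?_, fun k _ => ?_, jsr_eq_of_norm_rowSum_eq hpos hrow,
    ⟨weightedShift H (radialWeight n (modelProd T)) hμ,
      isWeightedShiftTensor_weightedShift hμ, embedCLM T hS, 1, one_pos, fun h => ?_, ?_, hXcomp,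
      by simpa using hXnorm⟩,
    fun co => ⟨hpoly co, spectralRadius_polyOp_le (by positivity) hpoly co⟩⟩
  · rintro _ ⟨α, rfl⟩
    exact (le_abs_self _).trans (hμ i α)
  · exact isWeightedShiftTensor_weightedShift hμ i α 1
  · rw [hrow, Real.sqrt_mul (by positivity), Real.sqrt_sq (by positivity)]
  · simpa using hXle h
  · rintro i _ ⟨x, rfl⟩
    exact ⟨adjoint (T i) x, DFunLike.congr_fun (hXcomp i) x⟩

end
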